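/- arXiv:2105.10766 — 2 statements merged into one kernel-verified Lean document; each statement's English description precedes it below -/
import Mathlib

section
/- Let g be a compactly driven system with the USP such that for every x ∈ X the map g(·,x) : U → X is injective. Then the solution map Ψ : U^ℤ → X^ℤ, (Ψ(ū))_n = h(←u^n) where E(←u) = {h(←u)}, is injective, and Ψ is a topological embedding: a homeomorphism of U^ℤ onto its image Ψ(U^ℤ) (both spaces carrying the product topology). -/
open Metric Set Filter Topology Function

universe u' v'

variable {U : Type u'} {X : Type v'}

/-- `proc g u j m x = φ_ū(m+j, m, x)`: apply `g_{u m}, g_{u (m+1)}, …, g_{u (m+j-1)}`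
to `x`, in that order. -/
def proc (g : U → X → X) (u : ℤ → U) : ℕ → ℤ → X → X
  | 0, _, x => x
  | j + 1, m, x => g (u (m + j)) (proc g u j m x)

/-- A solution of the driven system `g` for the input `u`. -/
def IsSolution (g : U → X → X) (u : ℤ → U) (x : ℤ → X) : Prop :=
  ∀ n : ℤ, x (n + 1) = g (u n) (x n)

/-- The unique solution property: every input has exactly one solution. -/
def USP (g : U → X → X) : Prop :=
  ∀ u : ℤ → U, ∃! x : ℤ → X, IsSolution g u x

/-- The set of reachable states at time `n`: `X_n(ū) = ⋂_{j ≥ 1} φ_ū(n, n - j, X)`. -/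
def reach (g : U → X → X) (u : ℤ → U) (n : ℤ) : Set X :=
  ⋂ j : ℕ, Set.range (proc g u (j + 1) (n - (j + 1)))

/-- The reachable set `X_U = ⋃ {X_n(ū) : n ∈ ℤ, ū ∈ U^ℤ}`. -/
def reachSet (g : U → X → X) : Set X :=
  ⋃ u : ℤ → U, ⋃ n : ℤ, reach g u n

/-- The left-infinite part `←u^n = (…, u_{n-2}, u_{n-1})` of an input `u`;
coordinate `k : ℕ` corresponds to time `n - 1 - k` (so `0` is the most recent one). -/
def leftOf (u : ℤ → U) (n : ℤ) : ℕ → U := fun k => u (n - 1 - (k : ℤ))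

/-- The right-shift map `r : (…, u_{-2}, u_{-1}) ↦ (…, u_{-3}, u_{-2})`. -/
def shift (w : ℕ → U) : ℕ → U := fun k => w (k + 1)

/-- The concatenation map `σ_v : (…, u_{-2}, u_{-1}) ↦ (…, u_{-2}, u_{-1}, v)`. -/
def append (v : U) (w : ℕ → U) : ℕ → U := fun k => Nat.casesOn k v w

/-- `encProc g w j = φ_ū(0, -j, ·)` for any input `ū` whose left-infinite part is `w`. -/
def encProc (g : U → X → X) : (ℕ → U) → ℕ → X → X
  | _, 0, x => x
  | w, j + 1, x => g (w 0) (encProc g (shift w) j x)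

/-- The encoding map `E(←u) = X_0(ū) = ⋂_{j ≥ 1} φ_ū(0, -j, X)`. -/
def enc (g : U → X → X) (w : ℕ → U) : Set X :=
  ⋂ j : ℕ, Set.range (encProc g w (j + 1))

/-- The map `g̃_v : (…, x_{-2}, x_{-1}) ↦ (…, x_{-2}, x_{-1}, g(v, x_{-1}))`. -/
def tildeg (g : U → X → X) (v : U) (x : ℕ → X) : ℕ → X :=
  fun k => Nat.casesOn k (g v (x 0)) x

/-- The Hausdorff semi-distance `dist(A, B) = sup_{a ∈ A} inf_{b ∈ B} d(a, b)`. -/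
noncomputable def semiDist [MetricSpace X] (A B : Set X) : ℝ :=
  sSup ((fun a => Metric.infDist a B) '' A)

theorem aux_encProc_cont [TopologicalSpace X] [TopologicalSpace U]
    (g : U → X → X) (hg : Continuous fun p : U × X => g p.1 p.2) (j : ℕ) :
    Continuous fun p : (ℕ → U) × X => encProc g p.1 j p.2 := by
  induction j with
  | zero => exact continuous_snd
  | succ j ih =>
    have hs : Continuous fun p : (ℕ → U) × X => ((shift p.1, p.2) : (ℕ → U) × X) := by
      refine Continuous.prodMk (continuous_pi fun k => ?_) continuous_snd
      exact (continuous_apply (k + 1)).comp continuous_fst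
    have h0 : Continuous fun p : (ℕ → U) × X => p.1 0 :=
      (continuous_apply 0).comp continuous_fst
    exact hg.comp (h0.prodMk (ih.comp hs))

theorem aux_h_rec (g : U → X → X) (h : (ℕ → U) → X) (hh : ∀ w : ℕ → U, enc g w = {h w})
    (w : ℕ → U) : h w = g (w 0) (h (shift w)) := by
  have h1 : h (shift w) ∈ enc g (shift w) := by rw [hh]; rfl
  have h2 : g (w 0) (h (shift w)) ∈ enc g w := by
    refine mem_iInter.2 fun j => ?_
    cases j with
    | zero => exact ⟨h (shift w), rfl⟩
    | succ j =>
      obtain ⟨y, hy⟩ := mem_iInter.1 h1 j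
      exact ⟨y, congrArg (g (w 0)) hy⟩
  rw [hh] at h2
  exact (mem_singleton_iff.1 h2).symm

theorem aux_h_cont [MetricSpace X] [CompactSpace X] [MetricSpace U] [CompactSpace U]
    (g : U → X → X) (hg : Continuous fun p : U × X => g p.1 p.2)
    (h : (ℕ → U) → X) (hh : ∀ w : ℕ → U, enc g w = {h w}) : Continuous h := by
  have : {p : (ℕ → U) × X | p.2 = h p.1} =
      ⋂ j : ℕ, range (fun p : (ℕ → U) × X => ((p.1, encProc g p.1 (j + 1) p.2) : (ℕ → U) × X)) := by
    ext ⟨w, x⟩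
    have hx : x = h w ↔ x ∈ enc g w := by rw [hh]; rfl
    simp only [mem_setOf_eq, hx, enc, mem_iInter, mem_range, Prod.exists, Prod.mk.injEq]
    refine forall_congr' fun j => ⟨fun ⟨y, hy⟩ => ⟨w, y, rfl, hy⟩, ?_⟩
    rintro ⟨_, y, rfl, hy⟩
    exact ⟨y, hy⟩
  have hc : IsClosed {p : (ℕ → U) × X | p.2 = h p.1} := by
    rw [this]
    refine isClosed_iInter fun j => (isCompact_range ?_).isClosed
    exact continuous_fst.prodMk (aux_encProc_cont g hg (j + 1))
  refine continuous_iff_isClosed.2 fun C hC => ?_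
  have hp : h ⁻¹' C = Prod.fst '' ({p : (ℕ → U) × X | p.2 = h p.1} ∩ Prod.snd ⁻¹' C) := by
    ext w
    constructor
    · intro hw
      exact ⟨(w, h w), ⟨rfl, hw⟩, rfl⟩
    · rintro ⟨⟨w', x⟩, ⟨h1, h2⟩, rfl⟩
      simp only [mem_setOf_eq, mem_preimage] at h1 h2 ⊢
      exact h1 ▸ h2
  rw [hp]
  exact ((hc.inter (hC.preimage continuous_snd)).isCompact.image continuous_fst).isClosed

/-- under the USP, if `g(·, x)` is injective for every `x ∈ X`, then the
solution map `Ψ(ū) = (h(←u^n))_{n ∈ ℤ}` is injective and is a topological embedding,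
i.e. a homeomorphism of `U^ℤ` onto its image. -/
theorem stmt_16 [MetricSpace X] [CompactSpace X] [MetricSpace U] [CompactSpace U]
    (g : U → X → X) (hg : Continuous fun p : U × X => g p.1 p.2)
    (husp : USP g) (hinj : ∀ x : X, Function.Injective fun v : U => g v x)
    (h : (ℕ → U) → X) (hh : ∀ w : ℕ → U, enc g w = {h w}) :
    Function.Injective (fun (u : ℤ → U) (n : ℤ) => h (leftOf u n)) ∧
      Topology.IsEmbedding (fun (u : ℤ → U) (n : ℤ) => h (leftOf u n)) := by
  have hc := aux_h_cont g hg h hh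
  have hrec : ∀ (u : ℤ → U) (n : ℤ), h (leftOf u (n + 1)) = g (u n) (h (leftOf u n)) := by
    intro u n
    rw [aux_h_rec g h hh (leftOf u (n + 1))]
    have e0 : leftOf u (n + 1) 0 = u n := by simp [leftOf]
    have e1 : shift (leftOf u (n + 1)) = leftOf u n := by
      funext k
      simp only [shift, leftOf]
      congr 1
      push_cast
      ring
    rw [e0, e1]
  have hi : Function.Injective (fun (u : ℤ → U) (n : ℤ) => h (leftOf u n)) := by
    intro u v huv
    funext n
    have a := congrFun huv n
    have b := congrFun huv (n + 1)
    simp only [hrec] at a b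
    rw [← a] at b
    exact hinj _ b
  refine ⟨hi, ?_⟩
  have hcont : Continuous (fun (u : ℤ → U) (n : ℤ) => h (leftOf u n)) := by
    refine continuous_pi fun n => hc.comp (continuous_pi fun k => ?_)
    exact continuous_apply _
  exact (hcont.isClosedEmbedding hi).isEmbedding
end

section
/- Let g be a driven system (U a metric space, not necessarily compact) such that the encoding map E : ←U → H_X is continuous (g has the GIRST), and suppose there exists at least one input v̄ ∈ U^ℤ having exactly one solution. Then g has the USP. -/
open Metric Set Filter Topology Function

universe u' v'

variable {U : Type u'} {X : Type v'}

lemma aux_encProc_succ (g : U → X → X) (j : ℕ) : ∀ (w : ℕ → U) (x : X),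
    encProc g w (j + 1) x = encProc g w j (g (w j) x) := by
  induction j with
  | zero => intro w x; rfl
  | succ j ih =>
    intro w x
    change g (w 0) (encProc g (shift w) (j + 1) x) = g (w 0) (encProc g (shift w) j _)
    rw [ih]
    rfl

lemma aux_range_anti (g : U → X → X) (w : ℕ → U) (j : ℕ) :
    range (encProc g w (j + 1)) ⊆ range (encProc g w j) := by
  rintro _ ⟨x, rfl⟩
  exact ⟨_, (aux_encProc_succ g j w x).symm⟩

lemma aux_cont [TopologicalSpace X] [TopologicalSpace U]
    (g : U → X → X) (hg : Continuous fun p : U × X => g p.1 p.2) (j : ℕ) :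
    ∀ w : ℕ → U, Continuous (encProc g w j) := by
  induction j with
  | zero => intro w; exact continuous_id
  | succ j ih =>
    intro w
    exact hg.comp (continuous_const.prodMk (ih (shift w)))

lemma aux_enc_nonempty [MetricSpace X] [CompactSpace X] [MetricSpace U] [Nonempty X]
    (g : U → X → X) (hg : Continuous fun p : U × X => g p.1 p.2) (w : ℕ → U) :
    (enc g w).Nonempty := by
  apply IsCompact.nonempty_iInter_of_sequence_nonempty_isCompact_isClosed
  · intro i; exact aux_range_anti g w (i + 1)
  · intro i; exact range_nonempty _
  · exact isCompact_range (aux_cont g hg _ w)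
  · intro i; exact (isCompact_range (aux_cont g hg _ w)).isClosed

lemma aux_enc_image [MetricSpace X] [CompactSpace X] [MetricSpace U]
    (g : U → X → X) (hg : Continuous fun p : U × X => g p.1 p.2) (w : ℕ → U) :
    enc g w = g (w 0) '' enc g (shift w) := by
  have hc : Continuous (g (w 0)) := hg.comp (continuous_const.prodMk continuous_id)
  apply Subset.antisymm
  · intro x hx
    have hcl : ∀ j : ℕ, IsClosed
        (range (encProc g (shift w) (j + 1)) ∩ g (w 0) ⁻¹' {x}) := fun j =>
      (isCompact_range (aux_cont g hg _ _)).isClosed.inter (isClosed_singleton.preimage hc)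
    have hne : (⋂ j : ℕ, range (encProc g (shift w) (j + 1)) ∩ g (w 0) ⁻¹' {x}).Nonempty := by
      apply IsCompact.nonempty_iInter_of_sequence_nonempty_isCompact_isClosed
      · intro i
        exact inter_subset_inter_left _ (aux_range_anti g _ (i + 1))
      · intro i
        obtain ⟨y, hy⟩ := mem_iInter.1 hx (i + 1)
        exact ⟨encProc g (shift w) (i + 1) y, ⟨y, rfl⟩, hy⟩
      · exact (hcl 0).isCompact
      · exact hcl
    obtain ⟨y, hy⟩ := hne
    rw [mem_iInter] at hy
    exact ⟨y, mem_iInter.2 fun j => (hy j).1, (hy 0).2⟩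
  · rintro _ ⟨y, hy, rfl⟩
    refine mem_iInter.2 fun j => ?_
    obtain ⟨z, hz⟩ := aux_range_anti g _ j (mem_iInter.1 hy j)
    exact ⟨z, congrArg (g (w 0)) hz⟩

lemma aux_shift_leftOf (u : ℤ → U) (n : ℤ) : shift (leftOf u (n + 1)) = leftOf u n := by
  funext k
  simp only [shift, leftOf]
  congr 1
  push_cast
  ring

lemma aux_leftOf_zero (u : ℤ → U) (n : ℤ) : leftOf u (n + 1) 0 = u n := by
  simp [leftOf]

lemma aux_exists_sol [MetricSpace X] [CompactSpace X] [MetricSpace U]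
    (g : U → X → X) (hg : Continuous fun p : U × X => g p.1 p.2) (u : ℤ → U)
    (x : X) (hx : x ∈ enc g (leftOf u 0)) : ∃ z, IsSolution g u z ∧ z 0 = x := by
  have h : ∀ (n : ℤ) (y : X), ∃ z, y ∈ enc g (leftOf u (n + 1)) →
      z ∈ enc g (leftOf u n) ∧ g (u n) z = y := by
    intro n y
    by_cases hy : y ∈ enc g (leftOf u (n + 1))
    · have hy' := hy
      rw [aux_enc_image g hg, aux_shift_leftOf, aux_leftOf_zero] at hy'
      obtain ⟨z, hz, h⟩ := hy'
      exact ⟨z, fun _ => ⟨hz, h⟩⟩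
    · exact ⟨y, fun h => absurd h hy⟩
  choose P hP using h
  let b : ℕ → X := fun k => Nat.rec x (fun k y => P (-(k : ℤ) - 1) y) k
  let f : ℕ → X := fun k => Nat.rec x (fun k y => g (u (k : ℤ)) y) k
  have hb : ∀ k : ℕ, b k ∈ enc g (leftOf u (-(k : ℤ))) := by
    intro k
    induction k with
    | zero => simpa [b] using hx
    | succ k ih =>
      have e : -(k : ℤ) = (-(k : ℤ) - 1) + 1 := by ring
      rw [e] at ih
      have := (hP _ _ ih).1
      have e2 : -((k + 1 : ℕ) : ℤ) = -(k : ℤ) - 1 := by push_cast; ring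
      rw [e2]
      exact this
  have hb2 : ∀ k : ℕ, g (u (-(k : ℤ) - 1)) (b (k + 1)) = b k := by
    intro k
    have ih := hb k
    have e : -(k : ℤ) = (-(k : ℤ) - 1) + 1 := by ring
    rw [e] at ih
    exact (hP _ _ ih).2
  refine ⟨fun n => if 0 ≤ n then f n.toNat else b (-n).toNat, ?_, by simp [f]⟩
  intro n
  by_cases hn : 0 ≤ n
  · lift n to ℕ using hn
    have h1 : (0 : ℤ) ≤ (n : ℤ) + 1 := by omega
    have h2 : ((n : ℤ) + 1).toNat = n + 1 := by omega
    simp only [h1, h2, if_true, Int.natCast_nonneg, Int.toNat_natCast]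
    rfl
  · obtain ⟨k, rfl⟩ : ∃ k : ℕ, n = -(k : ℤ) - 1 := ⟨(-n - 1).toNat, by omega⟩
    have h2 : (-(-(k : ℤ) - 1)).toNat = k + 1 := by omega
    have h3 : (-(-(k : ℤ) - 1 + 1)).toNat = k := by omega
    simp only [hn, h2, h3, if_false]
    rw [hb2]
    split_ifs with h
    · have : k = 0 := by omega
      subst this
      rfl
    · rfl

lemma aux_sol_mem (g : U → X → X) (u : ℤ → U) (x : ℤ → X) (hx : IsSolution g u x) (n : ℤ) :
    x n ∈ enc g (leftOf u n) := by
  have key : ∀ (j : ℕ) (n : ℤ), encProc g (leftOf u n) j (x (n - j)) = x n := by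
    intro j
    induction j with
    | zero => intro n; simp [encProc]
    | succ j ih =>
      intro n
      obtain ⟨m, rfl⟩ : ∃ m, n = m + 1 := ⟨n - 1, by ring⟩
      change g (leftOf u (m + 1) 0) (encProc g (shift (leftOf u (m + 1))) j _) = _
      have e : m + 1 - ((j + 1 : ℕ) : ℤ) = m - j := by push_cast; ring
      rw [aux_leftOf_zero, aux_shift_leftOf, e, ih, hx]
  exact mem_iInter.2 fun j => ⟨_, key (j + 1) n⟩

lemma aux_splice [MetricSpace X] [CompactSpace X] [MetricSpace U]
    (g : U → X → X) (hg : Continuous fun p : U × X => g p.1 p.2) (v : ℕ → U)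
    (hv : (enc g v).Subsingleton) (k : ℕ) : ∀ w : ℕ → U,
    (enc g (fun i => if i < k then w i else v (i - k))).Subsingleton := by
  induction k with
  | zero => intro w; simpa using hv
  | succ k ih =>
    intro w
    rw [aux_enc_image g hg]
    have e : shift (fun i => if i < k + 1 then w i else v (i - (k + 1)))
        = fun i => if i < k then shift w i else v (i - k) := by
      funext i
      simp [shift]
    rw [e]
    exact (ih (shift w)).image _

/-- if `g` has the GIRST (the encoding map is continuous for the Hausdorff
metric) and some input has exactly one solution, then `g` has the USP. -/
theorem stmt_18 [MetricSpace X] [CompactSpace X] [MetricSpace U]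
    (g : U → X → X) (hg : Continuous fun p : U × X => g p.1 p.2)
    (hgirst : ∀ w : ℕ → U,
      Tendsto (fun w' : ℕ → U => Metric.hausdorffDist (enc g w') (enc g w))
        (𝓝 w) (𝓝 0))
    (hone : ∃ v : ℤ → U, ∃! x : ℤ → X, IsSolution g v x) :
    USP g := by
  obtain ⟨v, y, hy, hyu⟩ := hone
  have : Nonempty X := ⟨y 0⟩
  have hv : (enc g (leftOf v 0)).Subsingleton := by
    intro a ha b hb
    obtain ⟨za, hza, rfl⟩ := aux_exists_sol g hg v a ha
    obtain ⟨zb, hzb, rfl⟩ := aux_exists_sol g hg v b hb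
    rw [hyu za hza, hyu zb hzb]
  have hall : ∀ w : ℕ → U, (enc g w).Subsingleton := by
    intro w a ha b hb
    have ht : Tendsto (fun k : ℕ => fun i : ℕ => if i < k then w i else leftOf v 0 (i - k))
        atTop (𝓝 w) := by
      rw [tendsto_pi_nhds]
      intro i
      apply tendsto_const_nhds.congr'
      filter_upwards [eventually_gt_atTop i] with k hk
      simp [hk]
    refine eq_of_forall_dist_le fun ε hε => ?_
    obtain ⟨k, hk⟩ := (((hgirst w).comp ht).eventually (gt_mem_nhds (half_pos hε))).exists
    have hs := aux_splice g hg (leftOf v 0) hv k w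
    have hfin := Metric.hausdorffEDist_ne_top_of_nonempty_of_bounded
      (aux_enc_nonempty g hg (fun i : ℕ => if i < k then w i else leftOf v 0 (i - k)))
      (aux_enc_nonempty g hg w) (Bornology.IsBounded.all _) (Bornology.IsBounded.all _)
    obtain ⟨c, hc, hca⟩ := Metric.exists_dist_lt_of_hausdorffDist_lt' ha hk hfin
    obtain ⟨d, hd, hdb⟩ := Metric.exists_dist_lt_of_hausdorffDist_lt' hb hk hfin
    rw [hs hd hc] at hdb
    have := dist_triangle_left a b c
    linarith
  intro u
  obtain ⟨x, hx⟩ := aux_enc_nonempty g hg (leftOf u 0)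
  obtain ⟨z, hz, -⟩ := aux_exists_sol g hg u x hx
  refine ⟨z, hz, fun z' hz' => funext fun n => ?_⟩
  exact hall _ (aux_sol_mem g u z' hz' n) (aux_sol_mem g u z hz n)
end
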